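/- arXiv:2208.03180 — 2 statements merged into one kernel-verified Lean document; each statement's English description precedes it below -/
import Mathlib

section
/- Internal-wave eigenvector comparison (coefficient form of estimate (5.45) in Corollary 5.4). Let 0 < η ≤ 1, k_h ∈ 2πℤ² ∖ {0}, k_z ∈ 2πℤ ∖ {0}, a := |k_h|², and set ω := ω^gw(η,k_h,k_z) and ω_sp := ω^gw_sp(η,k_h,k_z). Define u := (1, (η/k_z)(a/ω² − 1), k_h/ω, −i(ω/k_z)(a/ω² − 1)) ∈ ℂ⁵, the Fourier coefficient vector of the compressible internal-wave eigenmode U^gw_{+,(k_h,k_z)}, and u_sp := (1, ηa/(k_zω_sp²), k_h/ω_sp, −ia/(k_zω_sp)) ∈ ℂ⁵, the Fourier coefficient vector of the soundproof pair (εp^gw_{sp,(k_h,k_z)}, U^gw_{sp,+,(k_h,k_z)}). Then |u − u_sp| ≤ 10η in the Euclidean norm of ℂ⁵, uniformly in (k_h, k_z). -/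
open Complex

noncomputable section

/-- The perturbed internal-wave frequency
`ω^gw(η,k_h,k_z) = (2η²a/(S + √A))^{1/2}`, with `a = |k_h|²`, `b = k_z²`,
`S = a + b + η²`, `A = S² − 4η²a`. -/
def omegaGW (η a b : ℝ) : ℝ :=
  Real.sqrt (2 * η ^ 2 * a /
    ((a + b + η ^ 2) + Real.sqrt ((a + b + η ^ 2) ^ 2 - 4 * η ^ 2 * a)))

/-- The soundproof internal-wave frequency `ω^gw_sp(η,k_h,k_z) = η|k_h|/(a+b)^{1/2}`. -/
def omegaGWsp (η a b : ℝ) : ℝ := η * Real.sqrt a / Real.sqrt (a + b)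

/-- Euclidean norm of a vector in `ℂ⁵`. -/
def vnorm (u : Fin 5 → ℂ) : ℝ := Real.sqrt (∑ i, ‖u i‖ ^ 2)

/-- Real core estimate. -/
theorem core_est (η q r s k0 k1 kz : ℝ) (hη0 : 0 < η) (hη1 : η ≤ 1) (hq : 0 < q)
    (hk : k0 ^ 2 + k1 ^ 2 = q ^ 2) (hqs : q ≤ s) (hs : 1 ≤ s) (hsr : s ≤ r) (hkz : 1 ≤ kz ^ 2)
    (hy : r ^ 2 - s ^ 2 = η ^ 2 - η ^ 2 * q ^ 2 / r ^ 2) :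
    ((η / kz) * (q ^ 2 / (η * q / r) ^ 2 - 1) - η * q ^ 2 / (kz * (η * q / s) ^ 2)) ^ 2
    + (k0 / (η * q / r) - k0 / (η * q / s)) ^ 2
    + (k1 / (η * q / r) - k1 / (η * q / s)) ^ 2
    + (((η * q / r) / kz) * (q ^ 2 / (η * q / r) ^ 2 - 1) - q ^ 2 / (kz * (η * q / s))) ^ 2
    ≤ (10 * η) ^ 2 := by
  have hs0 : 0 < s := by linarith
  have hr0 : 0 < r := by linarith
  have hkz0 : kz ≠ 0 := by
    rintro rfl
    norm_num at hkz
  have hqr : q / r ≤ 1 := by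
    rw [div_le_one hr0]; linarith
  have hqr0 : 0 < q / r := by positivity
  have hle : r ^ 2 - s ^ 2 ≤ η ^ 2 := by
    have : 0 < η ^ 2 * q ^ 2 / r ^ 2 := by positivity
    linarith
  have hd0 : 0 ≤ r - s := by linarith
  have hd1 : s * (r - s) ≤ η ^ 2 := by nlinarith
  have hd2 : r - s ≤ η ^ 2 := by nlinarith
  have hd3 : q * (r - s) ≤ η ^ 2 := by nlinarith
  have e2 : (η / kz) * (q ^ 2 / (η * q / r) ^ 2 - 1) - η * q ^ 2 / (kz * (η * q / s) ^ 2)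
      = -(η * (q / r) ^ 2) / kz := by
    have h1 : (η / kz) * (q ^ 2 / (η * q / r) ^ 2 - 1) - η * q ^ 2 / (kz * (η * q / s) ^ 2)
      = ((r ^ 2 - s ^ 2) - η ^ 2) / (η * kz) := by
      field_simp
      ring
    rw [h1, hy]
    field_simp
    ring
  have e3 : ∀ k : ℝ, k / (η * q / r) - k / (η * q / s) = k * ((r - s) / (η * q)) := by
    intro k
    field_simp
  have e5 : ((η * q / r) / kz) * (q ^ 2 / (η * q / r) ^ 2 - 1) - q ^ 2 / (kz * (η * q / s))
      = (q * (r - s) / η - η * (q / r)) / kz := by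
    field_simp
    ring
  rw [e2, e3, e3, e5]
  have hdiv : ∀ x : ℝ, (x / kz) ^ 2 ≤ x ^ 2 := by
    intro x
    rw [div_pow]
    exact div_le_self (sq_nonneg x) hkz
  have b2 : (-(η * (q / r) ^ 2) / kz) ^ 2 ≤ η ^ 2 := by
    refine (hdiv _).trans ?_
    rw [neg_sq]
    have : (q / r) ^ 2 ≤ 1 := pow_le_one₀ hqr0.le hqr
    have : η * (q / r) ^ 2 ≤ η := mul_le_of_le_one_right hη0.le this
    exact pow_le_pow_left₀ (by positivity) this 2
  have b3 : (k0 * ((r - s) / (η * q))) ^ 2 + (k1 * ((r - s) / (η * q))) ^ 2 ≤ η ^ 2 := by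
    have : (k0 * ((r - s) / (η * q))) ^ 2 + (k1 * ((r - s) / (η * q))) ^ 2
        = ((r - s) / η) ^ 2 := by
      rw [mul_pow, mul_pow, ← add_mul, hk]
      field_simp
    rw [this]
    refine pow_le_pow_left₀ (by positivity) ?_ 2
    rw [div_le_iff₀ hη0]
    nlinarith
  have b5 : ((q * (r - s) / η - η * (q / r)) / kz) ^ 2 ≤ η ^ 2 := by
    refine (hdiv _).trans ?_
    have h1 : q * (r - s) / η ≤ η := by
      rw [div_le_iff₀ hη0]
      nlinarith
    have h2 : 0 ≤ q * (r - s) / η := by positivity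
    have h3 : η * (q / r) ≤ η := mul_le_of_le_one_right hη0.le hqr
    have h4 : 0 < η * (q / r) := by positivity
    exact sq_le_sq' (by linarith) (by linarith)
  nlinarith

theorem one_le_two_pi_sq (n : ℤ) (hn : n ≠ 0) : 1 ≤ (2 * Real.pi * (n : ℝ)) ^ 2 := by
  have h1 : (1 : ℝ) ≤ (n : ℝ) ^ 2 := by
    have : (1 : ℤ) ≤ n ^ 2 := by
      have := sq_pos_of_ne_zero hn
      linarith
    exact_mod_cast this
  have h2 : 1 ≤ (2 * Real.pi) ^ 2 := by nlinarith [Real.pi_gt_three]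
  rw [mul_pow]
  nlinarith

/-- Existence of the square root `r` of the larger root. -/
theorem exists_r (η a b : ℝ) (hη0 : 0 < η) (ha : 0 < a) (hb : 0 < b) :
    ∃ r : ℝ, Real.sqrt (a + b) ≤ r ∧ omegaGW η a b = η * Real.sqrt a / r ∧
      r ^ 2 - (a + b) = η ^ 2 - η ^ 2 * a / r ^ 2 := by
  set A := (a + b + η ^ 2) ^ 2 - 4 * η ^ 2 * a with hA
  have hA0 : (a + b - η ^ 2) ^ 2 ≤ A := by
    rw [hA]; nlinarith [mul_pos (pow_pos hη0 2) hb]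
  have hsq : Real.sqrt A ^ 2 = A := Real.sq_sqrt ((sq_nonneg _).trans hA0)
  have hge : a + b - η ^ 2 ≤ Real.sqrt A := Real.le_sqrt_of_sq_le hA0
  set y := ((a + b + η ^ 2) + Real.sqrt A) / 2 with hy
  have hyc : a + b ≤ y := by rw [hy]; linarith
  have hy0 : 0 < y := by linarith
  have hr2 : Real.sqrt y ^ 2 = y := Real.sq_sqrt hy0.le
  refine ⟨Real.sqrt y, Real.sqrt_le_sqrt hyc, ?_, ?_⟩
  · unfold omegaGW
    rw [← hA]
    have : 2 * η ^ 2 * a / ((a + b + η ^ 2) + Real.sqrt A) = η ^ 2 * a / y := by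
      rw [hy]; field_simp
    rw [this, Real.sqrt_div (by positivity), Real.sqrt_mul (by positivity), Real.sqrt_sq hη0.le]
  · rw [hr2]
    have hq : y ^ 2 - (a + b + η ^ 2) * y + η ^ 2 * a = 0 := by
      rw [hy]; nlinarith
    field_simp
    linarith

/-- Internal-wave eigenvector comparison, coefficient form of
estimate (5.45) in Corollary 5.4.  Let `0 < η ≤ 1`, `k_h ∈ 2πℤ² ∖ {0}`,
`k_z ∈ 2πℤ ∖ {0}`, `a := |k_h|²`, `ω := ω^gw`, `ω_sp := ω^gw_sp`.  With
`u := (1, (η/k_z)(a/ω² − 1), k_h/ω, −i(ω/k_z)(a/ω² − 1))` (Fourier coefficient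
vector of the compressible internal-wave eigenmode) and
`u_sp := (1, ηa/(k_zω_sp²), k_h/ω_sp, −ia/(k_zω_sp))` (Fourier coefficient
vector of the soundproof pair), one has `|u − u_sp| ≤ 10η` in the Euclidean
norm of `ℂ⁵`, uniformly in `(k_h,k_z)`. -/
theorem stmt_18 (η : ℝ) (hη0 : 0 < η) (hη1 : η ≤ 1)
    (m : Fin 2 → ℤ) (hm : m ≠ 0) (n : ℤ) (hn : n ≠ 0) :
    let kh : Fin 2 → ℝ := fun i => 2 * Real.pi * (m i : ℝ)
    let kz : ℝ := 2 * Real.pi * (n : ℝ)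
    let a : ℝ := kh 0 ^ 2 + kh 1 ^ 2
    let b : ℝ := kz ^ 2
    let ω : ℝ := omegaGW η a b
    let ωsp : ℝ := omegaGWsp η a b
    let u : Fin 5 → ℂ :=
      ![1, (((η / kz) * (a / ω ^ 2 - 1) : ℝ) : ℂ), ((kh 0 / ω : ℝ) : ℂ),
        ((kh 1 / ω : ℝ) : ℂ), -I * (((ω / kz) * (a / ω ^ 2 - 1) : ℝ) : ℂ)]
    let usp : Fin 5 → ℂ :=
      ![1, ((η * a / (kz * ωsp ^ 2) : ℝ) : ℂ), ((kh 0 / ωsp : ℝ) : ℂ),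
        ((kh 1 / ωsp : ℝ) : ℂ), -I * ((a / (kz * ωsp) : ℝ) : ℂ)]
    vnorm (fun i => u i - usp i) ≤ 10 * η := by
  intro kh kz a b ω ωsp u usp
  have hkz : 1 ≤ kz ^ 2 := one_le_two_pi_sq n hn
  have hb : 0 < b := by
    show 0 < kz ^ 2
    linarith
  have ha : 0 < a := by
    have h : m 0 ≠ 0 ∨ m 1 ≠ 0 := by
      by_contra! h
      apply hm
      ext i
      fin_cases i
      · exact h.1
      · exact h.2
    show 0 < kh 0 ^ 2 + kh 1 ^ 2
    rcases h with h | h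
    · have : 1 ≤ kh 0 ^ 2 := one_le_two_pi_sq _ h
      nlinarith [sq_nonneg (kh 1)]
    · have : 1 ≤ kh 1 ^ 2 := one_le_two_pi_sq _ h
      nlinarith [sq_nonneg (kh 0)]
  obtain ⟨r, hr, hω, hy⟩ := exists_r η a b hη0 ha hb
  have hqa : Real.sqrt a ^ 2 = a := Real.sq_sqrt ha.le
  have key := core_est η (Real.sqrt a) r (Real.sqrt (a + b)) (kh 0) (kh 1) kz hη0 hη1
    (Real.sqrt_pos.2 ha) hqa.symm (Real.sqrt_le_sqrt (by linarith))
    (Real.one_le_sqrt.2 (by show 1 ≤ a + kz ^ 2; linarith)) hr hkz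
    (by rw [hqa, Real.sq_sqrt (by linarith)]; exact hy)
  rw [← hω, hqa] at key
  unfold vnorm
  refine Real.sqrt_le_iff.2 ⟨by positivity, le_trans (le_of_eq ?_) key⟩
  have hI : ∀ x y : ℝ, ‖-I * (x : ℂ) - -I * (y : ℂ)‖ ^ 2 = (x - y) ^ 2 := by
    intro x y
    rw [← mul_sub, norm_mul, norm_neg, Complex.norm_I, one_mul, ← Complex.ofReal_sub,
      Complex.norm_real, Real.norm_eq_abs, sq_abs]
  have hR : ∀ x y : ℝ, ‖(x : ℂ) - (y : ℂ)‖ ^ 2 = (x - y) ^ 2 := by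
    intro x y
    rw [← Complex.ofReal_sub, Complex.norm_real, Real.norm_eq_abs, sq_abs]
  rw [Fin.sum_univ_five]
  have h0 : ‖u 0 - usp 0‖ ^ 2 = 0 := by
    show ‖(1 : ℂ) - 1‖ ^ 2 = 0
    simp
  rw [h0, zero_add]
  exact congrArg₂ _ (congrArg₂ _ (congrArg₂ _ (hR _ _) (hR _ _)) (hR _ _)) (hI _ _)
end
end

section
/- Acoustic eigenvector comparison (coefficient form of estimate (5.47) in Corollary 5.4). Let 0 < η ≤ 1, k_h ∈ 2πℤ², k_z ∈ 2πℤ ∖ {0}, a := |k_h|², and set ω := ω^aw(η,k_h,k_z) and ω_a := ω^aw_a(k_h,k_z). Define u := (1, (η/k_z)(a/ω² − 1), k_h/ω, −i(ω/k_z)(a/ω² − 1)) ∈ ℂ⁵, the Fourier coefficient vector of the perturbed acoustic eigenmode U^aw_{+,(k_h,k_z)}, and u_a := (1, 0, k_h/ω_a, ik_z/ω_a) ∈ ℂ⁵, the Fourier coefficient vector of the pure acoustic eigenmode U^aw_{a,+,(k_h,k_z)}. Then |u − u_a| ≤ 10η in the Euclidean norm of ℂ⁵, uniformly in (k_h, k_z).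 -/
open Complex

noncomputable section

/-- The perturbed acoustic frequency
`ω^aw(η,k_h,k_z) = ((S + √A)/2)^{1/2}`, with `a = |k_h|²`, `b = k_z²`,
`S = a + b + η²`, `A = S² − 4η²a`. -/
def omegaAW (η a b : ℝ) : ℝ :=
  Real.sqrt (((a + b + η ^ 2) + Real.sqrt ((a + b + η ^ 2) ^ 2 - 4 * η ^ 2 * a)) / 2)

/-- The pure acoustic frequency `ω^aw_a(k_h,k_z) = (a + b)^{1/2}`. -/
def omegaAWa (a b : ℝ) : ℝ := Real.sqrt (a + b)

/-- Bounds on the perturbed frequency: `a + b ≤ ω² ≤ a + b + η²`. -/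
lemma omegaAW_sq_bounds (η a b : ℝ) (ha : 0 ≤ a) (hb : 0 ≤ b) :
    a + b ≤ omegaAW η a b ^ 2 ∧ omegaAW η a b ^ 2 ≤ a + b + η ^ 2 := by
  have hE : 0 ≤ η ^ 2 := sq_nonneg η
  unfold omegaAW
  rw [Real.sq_sqrt (by positivity)]
  have h1 : |a + b - η ^ 2| ≤ Real.sqrt ((a + b + η ^ 2) ^ 2 - 4 * η ^ 2 * a) := by
    apply Real.abs_le_sqrt
    nlinarith [mul_nonneg hE hb]
  have h2 : Real.sqrt ((a + b + η ^ 2) ^ 2 - 4 * η ^ 2 * a) ≤ a + b + η ^ 2 := by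
    apply Real.sqrt_le_iff.mpr
    constructor
    · positivity
    · nlinarith [mul_nonneg hE ha]
  have h3 := le_abs_self (a + b - η ^ 2)
  constructor <;> linarith

/-- The real-variable estimate behind the theorem. -/
lemma real_estimate (η p q k w v : ℝ) (hη0 : 0 < η) (hη1 : η ≤ 1) (hk : 1 ≤ k ^ 2)
    (hw : 0 < w) (hv : 0 < v) (hv2 : v ^ 2 = p ^ 2 + q ^ 2 + k ^ 2)
    (h1 : p ^ 2 + q ^ 2 + k ^ 2 ≤ w ^ 2) (h2 : w ^ 2 ≤ p ^ 2 + q ^ 2 + k ^ 2 + η ^ 2) :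
    ((η / k) * ((p ^ 2 + q ^ 2) / w ^ 2 - 1)) ^ 2 + (p / w - p / v) ^ 2 + (q / w - q / v) ^ 2
      + ((w / k) * ((p ^ 2 + q ^ 2) / w ^ 2 - 1) + k / v) ^ 2 ≤ (10 * η) ^ 2 := by
  have hk0 : k ≠ 0 := by rintro rfl; norm_num at hk
  have hv1 : 1 ≤ v := by nlinarith [sq_nonneg p, sq_nonneg q]
  have hvw : v ≤ w := by nlinarith
  have hw1 : 1 ≤ w := hv1.trans hvw
  obtain ⟨d, hd⟩ : ∃ d, d = w ^ 2 - v ^ 2 := ⟨_, rfl⟩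
  have hd0 : 0 ≤ d := by linarith
  have hdη : d ≤ η ^ 2 := by linarith
  have hηη : η ^ 2 ≤ η := by nlinarith
  obtain ⟨t, ht⟩ : ∃ t, t = 1 / v - 1 / w := ⟨_, rfl⟩
  have hvt : v * t = (w - v) / w := by rw [ht]; field_simp
  have hvt0 : 0 ≤ v * t := by rw [hvt]; exact div_nonneg (by linarith) hw.le
  have hvt1 : v * t ≤ η := by
    rw [hvt, div_le_iff₀ hw]
    nlinarith
  have hvt2 : v ^ 2 * t ^ 2 ≤ η ^ 2 := by nlinarith
  have hpq : (p ^ 2 + q ^ 2) / w ^ 2 - 1 = -((k ^ 2 + d) / w ^ 2) := by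
    rw [hd, hv2]; field_simp; ring
  have hr0 : 0 ≤ (k ^ 2 + d) / w ^ 2 := by positivity
  have hr1 : (k ^ 2 + d) / w ^ 2 ≤ 1 := by
    rw [div_le_one (by positivity)]; nlinarith [sq_nonneg p, sq_nonneg q]
  have e1 : ((η / k) * ((p ^ 2 + q ^ 2) / w ^ 2 - 1)) ^ 2 ≤ η ^ 2 := by
    rw [hpq, mul_pow, neg_sq, div_pow]
    have h3 : η ^ 2 / k ^ 2 ≤ η ^ 2 := div_le_self (by positivity) hk
    have h4 : ((k ^ 2 + d) / w ^ 2) ^ 2 ≤ 1 := pow_le_one₀ hr0 hr1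
    calc _ ≤ η ^ 2 * 1 := mul_le_mul h3 h4 (by positivity) (by positivity)
      _ = _ := mul_one _
  have e2 : (p / w - p / v) ^ 2 = p ^ 2 * t ^ 2 := by rw [ht]; ring
  have e3 : (q / w - q / v) ^ 2 = q ^ 2 * t ^ 2 := by rw [ht]; ring
  have e4 : (w / k) * ((p ^ 2 + q ^ 2) / w ^ 2 - 1) + k / v = k * t - d / (w * k) := by
    rw [hpq, ht]; field_simp; ring
  have e5 : (d / (w * k)) ^ 2 ≤ η ^ 2 := by
    rw [div_pow, mul_pow]
    have : 1 ≤ w ^ 2 * k ^ 2 := one_le_mul_of_one_le_of_one_le (one_le_pow₀ hw1) hk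
    calc _ ≤ d ^ 2 := div_le_self (by positivity) this
      _ ≤ η ^ 2 := pow_le_pow_left₀ hd0 (hdη.trans hηη) 2
  rw [e2, e3, e4]
  have hsum : p ^ 2 * t ^ 2 + q ^ 2 * t ^ 2 + k ^ 2 * t ^ 2 ≤ η ^ 2 := by
    rw [hv2] at hvt2; linarith
  have e6 : (k * t - d / (w * k)) ^ 2 ≤ 2 * (k ^ 2 * t ^ 2) + 2 * (d / (w * k)) ^ 2 := by
    have h5 := sq_nonneg (k * t + d / (w * k))
    generalize d / (w * k) = y at h5 ⊢
    linarith [add_pow_two (k * t) y, sub_sq (k * t) y, mul_pow k t 2]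
  have : 0 ≤ p ^ 2 * t ^ 2 := by positivity
  have : 0 ≤ q ^ 2 * t ^ 2 := by positivity
  have h6 : 0 ≤ η ^ 2 := sq_nonneg η
  rw [mul_pow]
  linarith

/-- Acoustic eigenvector comparison, coefficient form of
estimate (5.47) in Corollary 5.4.  Let `0 < η ≤ 1`, `k_h ∈ 2πℤ²`,
`k_z ∈ 2πℤ ∖ {0}`, `a := |k_h|²`, `ω := ω^aw(η,k_h,k_z)`,
`ω_a := ω^aw_a(k_h,k_z)`.  With
`u := (1, (η/k_z)(a/ω² − 1), k_h/ω, −i(ω/k_z)(a/ω² − 1))` (Fourier coefficient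
vector of the perturbed acoustic eigenmode) and
`u_a := (1, 0, k_h/ω_a, ik_z/ω_a)` (Fourier coefficient vector of the pure
acoustic eigenmode), one has `|u − u_a| ≤ 10η` in the Euclidean norm of `ℂ⁵`,
uniformly in `(k_h,k_z)`. -/
theorem stmt_19 (η : ℝ) (hη0 : 0 < η) (hη1 : η ≤ 1)
    (m : Fin 2 → ℤ) (n : ℤ) (hn : n ≠ 0) :
    let kh : Fin 2 → ℝ := fun i => 2 * Real.pi * (m i : ℝ)
    let kz : ℝ := 2 * Real.pi * (n : ℝ)
    let a : ℝ := kh 0 ^ 2 + kh 1 ^ 2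
    let b : ℝ := kz ^ 2
    let ω : ℝ := omegaAW η a b
    let ωa : ℝ := omegaAWa a b
    let u : Fin 5 → ℂ :=
      ![1, (((η / kz) * (a / ω ^ 2 - 1) : ℝ) : ℂ), ((kh 0 / ω : ℝ) : ℂ),
        ((kh 1 / ω : ℝ) : ℂ), -I * (((ω / kz) * (a / ω ^ 2 - 1) : ℝ) : ℂ)]
    let ua : Fin 5 → ℂ :=
      ![1, 0, ((kh 0 / ωa : ℝ) : ℂ), ((kh 1 / ωa : ℝ) : ℂ),
        I * ((kz / ωa : ℝ) : ℂ)]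
    vnorm (fun i => u i - ua i) ≤ 10 * η := by
  intro kh kz a b ω ωa u ua
  have hb : 1 ≤ kz ^ 2 := by
    have hn1 : (1 : ℝ) ≤ (n : ℝ) ^ 2 := by
      have : 0 < n ^ 2 := by positivity
      exact_mod_cast this
    have hpi := Real.pi_gt_three
    have : 1 ≤ (2 * Real.pi) ^ 2 := by nlinarith
    change 1 ≤ (2 * Real.pi * (n : ℝ)) ^ 2
    rw [mul_pow]
    nlinarith
  have ha0 : 0 ≤ a := by positivity
  have hb0 : 0 ≤ b := by positivity
  have hb1 : 1 ≤ b := hb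
  obtain ⟨h1, h2⟩ := omegaAW_sq_bounds η a b ha0 hb0
  have hw0 : 0 ≤ ω := Real.sqrt_nonneg _
  have hw : 0 < ω := by
    rcases hw0.lt_or_eq with h | h
    · exact h
    · exfalso
      change a + b ≤ ω ^ 2 at h1
      rw [← h] at h1
      norm_num at h1
      linarith
  have hv : 0 < ωa := Real.sqrt_pos.mpr (by linarith)
  have hv2 : ωa ^ 2 = a + b := Real.sq_sqrt (by linarith)
  have key := real_estimate η (kh 0) (kh 1) kz ω ωa hη0 hη1 hb hw hv hv2 h1 h2
  have hlast : -I * (((ω / kz) * (a / ω ^ 2 - 1) : ℝ) : ℂ) - I * ((kz / ωa : ℝ) : ℂ)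
      = -I * (((ω / kz) * (a / ω ^ 2 - 1) + kz / ωa : ℝ) : ℂ) := by
    push_cast; ring
  unfold vnorm
  apply Real.sqrt_le_iff.mpr
  refine ⟨by positivity, le_trans (le_of_eq ?_) key⟩
  have s0 : ‖u 0 - ua 0‖ ^ 2 = 0 := by simp [u, ua]
  have s1 : ‖u 1 - ua 1‖ ^ 2 = ((η / kz) * (a / ω ^ 2 - 1)) ^ 2 := by
    change ‖(((η / kz) * (a / ω ^ 2 - 1) : ℝ) : ℂ) - 0‖ ^ 2 = _
    rw [sub_zero, norm_real, Real.norm_eq_abs, sq_abs]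
  have s2 : ‖u 2 - ua 2‖ ^ 2 = (kh 0 / ω - kh 0 / ωa) ^ 2 := by
    change ‖((kh 0 / ω : ℝ) : ℂ) - ((kh 0 / ωa : ℝ) : ℂ)‖ ^ 2 = _
    rw [← ofReal_sub, norm_real, Real.norm_eq_abs, sq_abs]
  have s3 : ‖u 3 - ua 3‖ ^ 2 = (kh 1 / ω - kh 1 / ωa) ^ 2 := by
    change ‖((kh 1 / ω : ℝ) : ℂ) - ((kh 1 / ωa : ℝ) : ℂ)‖ ^ 2 = _
    rw [← ofReal_sub, norm_real, Real.norm_eq_abs, sq_abs]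
  have s4 : ‖u 4 - ua 4‖ ^ 2 = ((ω / kz) * (a / ω ^ 2 - 1) + kz / ωa) ^ 2 := by
    change ‖-I * (((ω / kz) * (a / ω ^ 2 - 1) : ℝ) : ℂ) - I * ((kz / ωa : ℝ) : ℂ)‖ ^ 2 = _
    rw [hlast, norm_mul, norm_neg, norm_I, one_mul, norm_real, Real.norm_eq_abs, sq_abs]
  rw [Fin.sum_univ_five, s0, s1, s2, s3, s4, zero_add]
end
end
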